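/- arXiv:1309.2903 — 6 statements merged into one kernel-verified Lean document; each statement's English description precedes it below -/
import Mathlib

section
/- Let X be an Archimedean ordered vector space. Let (x_τ)_{τ∈T} be a decreasing net in X (T a directed set, the map antitone) that is bounded below by some d ∈ X, and let L = {y ∈ X : y ≤ x_τ for all τ ∈ T} be the set of all lower bounds of the net. Then the infimum of the set {x_τ − y : τ ∈ T, y ∈ L} exists and equals 0. -/
section LowerBounds

open scoped Pointwise

theorem range_sub_lowerBounds_range {X T : Type*} [Sub X] [LE X] (x : T → X) :
    Set.range x - lowerBounds (Set.range x) =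
      {z : X | ∃ τ : T, ∃ y : X, (∀ σ : T, y ≤ x σ) ∧ z = x τ - y} := by
  ext z
  simp [Set.mem_sub, lowerBounds, eq_comm]

variable {X : Type*} [AddGroup X] [LE X] [AddRightMono X] {S : Set X} {b d : X}

theorem add_mem_lowerBounds_of_mem_lowerBounds_sub_lowerBounds
    (hb : b ∈ lowerBounds (S - lowerBounds S)) (hd : d ∈ lowerBounds S) :
    b + d ∈ lowerBounds S :=
  fun _ hs ↦ le_sub_iff_add_le.mp (hb (Set.sub_mem_sub hs hd))

theorem nsmul_add_mem_lowerBounds_of_mem_lowerBounds_sub_lowerBounds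
    (hb : b ∈ lowerBounds (S - lowerBounds S)) (hd : d ∈ lowerBounds S) (n : ℕ) :
    n • b + d ∈ lowerBounds S := by
  induction n with
  | zero => rwa [zero_nsmul, zero_add]
  | succ n ih =>
    rw [succ_nsmul', add_assoc]
    exact add_mem_lowerBounds_of_mem_lowerBounds_sub_lowerBounds hb ih

theorem zero_mem_lowerBounds_sub_lowerBounds (S : Set X) :
    0 ∈ lowerBounds (S - lowerBounds S) := by
  rintro _ ⟨s, hs, y, hy, rfl⟩
  exact sub_nonneg.mpr (hy hs)

theorem archimedean_inf_net_sub_lowerBounds_eq_zero_general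
    (hArch : ∀ x y : X, 0 ≤ x → (∀ n : ℕ, 1 ≤ n → n • y ≤ x) → y ≤ 0)
    (hne : S.Nonempty) (hbdd : BddBelow S) :
    IsGLB (S - lowerBounds S) 0 := by
  refine ⟨zero_mem_lowerBounds_sub_lowerBounds S, fun b hb ↦ ?_⟩
  obtain ⟨s, hs⟩ := hne
  obtain ⟨d, hd⟩ := hbdd
  have nsmul_le (n : ℕ) : n • b ≤ s - d :=
    le_sub_iff_add_le.mpr (nsmul_add_mem_lowerBounds_of_mem_lowerBounds_sub_lowerBounds hb hd n hs)
  exact hArch (s - d) b (sub_nonneg.mpr (hd hs)) fun n _ ↦ nsmul_le n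

end LowerBounds

/-- In an Archimedean ordered vector space, for any decreasing net
`x : T → X` over a (nonempty) directed set `T` that is bounded below by `d`,
the infimum of `{x_τ - y : τ ∈ T, y a lower bound of the net}` exists and equals `0`. -/
theorem archimedean_inf_net_sub_lowerBounds_eq_zero
    {X : Type*} [AddCommGroup X] [PartialOrder X] [IsOrderedAddMonoid X] [Module ℝ X] [PosSMulMono ℝ X]
    (hArch : ∀ x y : X, 0 ≤ x → (∀ n : ℕ, 1 ≤ n → n • y ≤ x) → y ≤ 0)
    {T : Type*} [Preorder T] [Nonempty T]
    (hdir : ∀ a b : T, ∃ c : T, a ≤ c ∧ b ≤ c)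
    (x : T → X) (hx : Antitone x)
    (d : X) (hd : ∀ τ : T, d ≤ x τ) :
    IsGLB {z : X | ∃ τ : T, ∃ y : X, (∀ σ : T, y ≤ x σ) ∧ z = x τ - y} 0 := by
  rw [← range_sub_lowerBounds_range]
  exact archimedean_inf_net_sub_lowerBounds_eq_zero_general hArch
    (Set.range_nonempty x) ⟨d, Set.forall_mem_range.mpr hd⟩
end

section
/- Let X be an almost Archimedean ordered vector space, let Y be an ordered vector space, and let T : Y₊ → X₊ be an additive mapping (T(u + v) = T(u) + T(v) for all u, v ∈ Y₊). Then there exists a linear operator S : Y → X such that S(u) = T(u) for every u ∈ Y₊. -/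
/-!
Fix `m` in the cone and measure the failure of homogeneity by the defect `r ↦ T (r • m) - r • T m`.
It is additive in `r`, vanishes at the natural numbers, and lies between `-T m` and `T m` for
`0 ≤ r ≤ 1`. Subtracting the integer part of `r`, the same bounds hold for every `r ≥ 0`, hence for
all natural multiples of each value, so the defect is zero because `X` is almost Archimedean.

Since `T` is homogeneous, `{(u, T u)}` is a cone in `Y × X`. Its linear span consists of the
differences `(u - v, T u - T v)`, so it is the graph of a linear map on the span of the cone of `Y`,
which extends to all of `Y`.
-/

section AlmostArchimedean

variable {X : Type*} [AddCommGroup X] [PartialOrder X]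

variable (X) in
/-- An ordered group is almost Archimedean if the only element all of whose integer multiples
are bounded above by a common nonnegative element is `0`. -/
def IsAlmostArchimedean : Prop :=
  ∀ x y : X, 0 ≤ x → (∀ n : ℤ, n • y ≤ x) → y = 0

lemma IsAlmostArchimedean.eq_zero_of_forall_nsmul_mem_Icc [IsOrderedAddMonoid X]
    (hX : IsAlmostArchimedean X) {x y : X} (hxy : ∀ n : ℕ, n • y ∈ Set.Icc (-x) x) : y = 0 := by
  have x_nonneg : 0 ≤ x := by simpa using (hxy 0).2
  refine hX x y x_nonneg fun n => ?_
  obtain ⟨k, rfl | rfl⟩ := n.eq_nat_or_neg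
  · rw [natCast_zsmul]
    exact (hxy k).2
  · rw [neg_zsmul, natCast_zsmul]
    exact neg_le.1 (hxy k).1

end AlmostArchimedean

section Homogeneity

variable {S : Type*} [Semiring S]

lemma exists_eq_natCast_add_le_one [LinearOrder S] [IsOrderedRing S] [CanonicallyOrderedAdd S]
    [AddLeftReflectLE S] [Archimedean S] (s : S) :
    ∃ k : ℕ, ∃ ε ≤ 1, s = k + ε := by
  obtain ⟨n, s_le⟩ := exists_nat_ge s
  induction n with
  | zero => exact ⟨0, s, s_le.trans (by simp), by simp⟩
  | succ n ih =>
    rcases le_total s n with s_le_n | n_le_s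
    · exact ih s_le_n
    · obtain ⟨ε, rfl⟩ := exists_add_of_le n_le_s
      exact ⟨n, ε, by simpa using s_le, rfl⟩

lemma map_smul_le_of_le_one {M X : Type*} [AddCommMonoid M] [Module S M] [AddCommMonoid X]
    [Preorder X] [IsOrderedAddMonoid X] [LE S] [ExistsAddOfLE S] {f : M →+ X}
    (hf : ∀ m, 0 ≤ f m) (m : M) {ε : S} (hε : ε ≤ 1) : f (ε • m) ≤ f m := by
  obtain ⟨δ, one_eq⟩ := exists_add_of_le hε
  calc f (ε • m) ≤ f (ε • m) + f (δ • m) := le_add_of_nonneg_right (hf _)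
    _ = f m := by rw [← map_add, ← add_smul, ← one_eq, one_smul]

variable {M X : Type*} [AddCommMonoid M] [Module S M] [AddCommGroup X] [Module S X]

/-- The defect `r ↦ f (r • m) - r • f m`, measuring how far the additive map `f` is from being
homogeneous at `m`, as an additive map of the scalar `r`. -/
def smulDefect (f : M →+ X) (m : M) : S →+ X :=
  f.comp ((smulAddHom S M).flip m) - (smulAddHom S X).flip (f m)

lemma smulDefect_apply (f : M →+ X) (m : M) (r : S) :
    smulDefect f m r = f (r • m) - r • f m := rfl

lemma smulDefect_natCast (f : M →+ X) (m : M) (k : ℕ) : smulDefect f m (k : S) = 0 := by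
  simp only [smulDefect_apply, Nat.cast_smul_eq_nsmul, map_nsmul, sub_self]

variable [PartialOrder X] [IsOrderedAddMonoid X] {f : M →+ X}

lemma smulDefect_mem_Icc_of_le_one [PartialOrder S] [CanonicallyOrderedAdd S]
    [IsOrderedModule S X] (hf : ∀ m, 0 ≤ f m) (m : M) {ε : S} (hε : ε ≤ 1) :
    smulDefect f m ε ∈ Set.Icc (-f m) (f m) := by
  have smul_map_nonneg : 0 ≤ ε • f m := smul_nonneg zero_le (hf m)
  have smul_map_le : ε • f m ≤ f m := smul_le_of_le_one_left (hf m) hε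
  rw [smulDefect_apply]
  constructor
  · rw [neg_le, neg_sub]
    exact (sub_le_self _ (hf _)).trans smul_map_le
  · exact (sub_le_self _ smul_map_nonneg).trans (map_smul_le_of_le_one hf m hε)

variable [LinearOrder S] [IsOrderedRing S] [CanonicallyOrderedAdd S] [AddLeftReflectLE S]
  [Archimedean S] [IsOrderedModule S X]

lemma smulDefect_mem_Icc (hf : ∀ m, 0 ≤ f m) (m : M) (r : S) :
    smulDefect f m r ∈ Set.Icc (-f m) (f m) := by
  obtain ⟨k, ε, hε, rfl⟩ := exists_eq_natCast_add_le_one r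
  rw [map_add, smulDefect_natCast, zero_add]
  exact smulDefect_mem_Icc_of_le_one hf m hε

lemma IsAlmostArchimedean.map_smul_of_nonneg (hX : IsAlmostArchimedean X)
    (hf : ∀ m, 0 ≤ f m) (r : S) (m : M) : f (r • m) = r • f m := by
  suffices smulDefect f m r = 0 from sub_eq_zero.1 this
  refine hX.eq_zero_of_forall_nsmul_mem_Icc (x := f m) fun n => ?_
  rw [← map_nsmul]
  exact smulDefect_mem_Icc hf m (n • r)

end Homogeneity

section Extension

lemma exists_sub_eq_of_mem_span_pointedCone {R E : Type*} [Ring R] [LinearOrder R]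
    [IsOrderedRing R] [AddCommGroup E] [Module R E] (C : PointedCone R E) {x : E}
    (hx : x ∈ Submodule.span R (C : Set E)) : ∃ u ∈ C, ∃ v ∈ C, u - v = x := by
  induction hx using Submodule.span_induction with
  | mem u hu => exact ⟨u, hu, 0, C.zero_mem, sub_zero u⟩
  | zero => exact ⟨0, C.zero_mem, 0, C.zero_mem, sub_zero 0⟩
  | add x y _ _ ihx ihy =>
    obtain ⟨u, hu, v, hv, rfl⟩ := ihx
    obtain ⟨u', hu', v', hv', rfl⟩ := ihy
    exact ⟨u + u', C.add_mem hu hu', v + v', C.add_mem hv hv', add_sub_add_comm ..⟩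
  | smul r x _ ih =>
    obtain ⟨u, hu, v, hv, rfl⟩ := ih
    rcases le_total 0 r with r_nonneg | r_nonpos
    · exact ⟨r • u, C.smul_mem r_nonneg hu, r • v, C.smul_mem r_nonneg hv, (smul_sub ..).symm⟩
    · have neg_r_nonneg : 0 ≤ -r := neg_nonneg.2 r_nonpos
      refine ⟨-r • v, C.smul_mem neg_r_nonneg hv, -r • u, C.smul_mem neg_r_nonneg hu, ?_⟩
      rw [neg_smul, neg_smul, neg_sub_neg, smul_sub]

variable {K E X : Type*} [Field K] [LinearOrder K] [IsStrictOrderedRing K]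
  [AddCommGroup E] [Module K E] [AddCommGroup X] [Module K X]

lemma exists_linearMap_extension_of_pointedCone (C : PointedCone K E)
    (f : C →ₗ[{c : K // 0 ≤ c}] X) : ∃ S : E →ₗ[K] X, ∀ u : C, S u = f u := by
  let graphCone : PointedCone K (E × X) := LinearMap.range (C.subtype.prod f)
  let G : Submodule K (E × X) := Submodule.span K (graphCone : Set (E × X))
  have snd_eq_zero (z : E × X) (hz : z ∈ G) (fst_eq_zero : z.1 = 0) : z.2 = 0 := by
    obtain ⟨_, ⟨u, rfl⟩, _, ⟨v, rfl⟩, rfl⟩ := exists_sub_eq_of_mem_span_pointedCone graphCone hz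
    have u_eq_v : u = v := Subtype.ext (sub_eq_zero.1 fst_eq_zero)
    rw [u_eq_v, sub_self, Prod.snd_zero]
  obtain ⟨S, hS⟩ := G.toLinearPMap.toFun.exists_extend
  refine ⟨S, fun u => ?_⟩
  have mem_graph : ((u : E), f u) ∈ G.toLinearPMap.graph := by
    rw [G.toLinearPMap_graph_eq snd_eq_zero]
    exact Submodule.subset_span ⟨u, rfl⟩
  obtain ⟨w, hwu, hwf⟩ := (LinearPMap.mem_graph_iff _).1 mem_graph
  calc S u = S w := by rw [hwu]
    _ = G.toLinearPMap w := LinearMap.congr_fun hS w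
    _ = f u := hwf

theorem exists_linear_extension_of_additive_on_cone_general [Archimedean K] [PartialOrder X]
    [IsOrderedAddMonoid X] [PosSMulMono K X] (hX : IsAlmostArchimedean X)
    (C : PointedCone K E) (f : C →+ X) (hf : ∀ u, 0 ≤ f u) :
    ∃ S : E →ₗ[K] X, ∀ u : C, S u = f u := by
  have : IsOrderedModule K X := {}
  exact exists_linearMap_extension_of_pointedCone C
    { f with map_smul' := hX.map_smul_of_nonneg hf }

end Extension

/-- If `X` is an almost Archimedean ordered vector space, `Y` is an ordered
vector space, and `T` maps the positive cone of `Y` additively into the positive cone of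
`X`, then `T` extends to a linear operator `S : Y → X`. -/
theorem exists_linear_extension_of_additive_on_cone
    {X : Type*} [AddCommGroup X] [PartialOrder X] [IsOrderedAddMonoid X] [Module ℝ X] [PosSMulMono ℝ X]
    {Y : Type*} [AddCommGroup Y] [PartialOrder Y] [IsOrderedAddMonoid Y] [Module ℝ Y] [PosSMulMono ℝ Y]
    (hAA : ∀ x y : X, 0 ≤ x → (∀ n : ℤ, n • y ≤ x) → y = 0)
    (T : Y → X)
    (hTpos : ∀ u : Y, 0 ≤ u → 0 ≤ T u)
    (hTadd : ∀ u v : Y, 0 ≤ u → 0 ≤ v → T (u + v) = T u + T v) :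
    ∃ S : Y →ₗ[ℝ] X, ∀ u : Y, 0 ≤ u → S u = T u := by
  let f : PointedCone.positive ℝ Y →+ X := .mk' (fun u => T u) fun u v => hTadd u v u.2 v.2
  exact (exists_linear_extension_of_additive_on_cone_general hAA _ f fun u => hTpos u u.2).imp
    fun _ hS u hu => hS ⟨u, hu⟩
end

section
/- Let X be an ordered vector space such that every additive mapping T : ℝ₊ → X₊ (where ℝ₊ = [0,∞) and T(a + b) = T(a) + T(b) for all a, b ≥ 0) admits an extension to a linear mapping S : ℝ → X with S(a) = T(a) for all a ≥ 0. Then X is almost Archimedean. -/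
/-!
If `n • y ≤ x` for all integers `n`, then by convexity `t • y ≤ x` for all scalars `t`, so
`a • x + φ a • y` is positive for all `a > 0` and any additive `φ`, however irregular. A linear
extension of `a ↦ a • x + φ a • y` forces `y = 0` as soon as `φ` is not homogeneous, and a
`ℚ`-linear projection of the scalars onto `ℚ` is such a `φ` once some scalar is irrational.
-/

section ScalarBounds

variable {K X : Type*} [Field K] [LinearOrder K]
  [AddCommGroup X] [PartialOrder X] [IsOrderedAddMonoid X] [Module K X] [PosSMulMono K X] {x y : X}

theorem smul_le_of_forall_zsmul_le [IsStrictOrderedRing K] [Archimedean K]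
    (hxy : ∀ n : ℤ, n • y ≤ x) (t : K) : t • y ≤ x := by
  have hconvex : Convex K {s : K | s • y ≤ x} :=
    (convex_Iic x).linear_preimage (LinearMap.toSpanSingleton K X y)
  have hint (n : ℤ) : (n : K) ∈ {s : K | s • y ≤ x} := by
    simpa only [Set.mem_ofPred_eq, Int.cast_smul_eq_zsmul] using hxy n
  obtain ⟨m, hm⟩ := exists_int_lt t
  obtain ⟨n, hn⟩ := exists_int_gt t
  exact hconvex.ordConnected.out (hint m) (hint n) ⟨hm.le, hn.le⟩

theorem smul_add_smul_nonneg_of_forall_smul_le (hxy : ∀ t : K, t • y ≤ x) {a : K} (ha : 0 < a)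
    (b : K) : 0 ≤ a • x + b • y := by
  have hscaled : a • (-b / a) • y ≤ a • x := smul_le_smul_of_nonneg_left (hxy _) ha.le
  rw [smul_smul, mul_div_cancel₀ _ ha.ne', neg_smul] at hscaled
  exact neg_le_iff_add_nonneg.mp hscaled

theorem smul_add_map_smul_nonneg (hxy : ∀ t : K, t • y ≤ x) (φ : K →+ K) {a : K} (ha : 0 ≤ a) :
    0 ≤ a • x + φ a • y := by
  rcases ha.eq_or_lt with rfl | ha
  · simp
  · exact smul_add_smul_nonneg_of_forall_smul_le hxy ha (φ a)

end ScalarBounds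

theorem eq_zero_of_linearMap_eq_smul_add_smul {K X : Type*} [DivisionRing K]
    [AddCommGroup X] [Module K X] {x y : X} {S : K →ₗ[K] X} {φ : K → K} {c : K}
    (hS_one : S 1 = (1 : K) • x + φ 1 • y)
    (hS : S c = c • x + φ c • y) (hφ : φ c ≠ c * φ 1) : y = 0 := by
  have hcompare : c • x + φ c • y = c • x + (c * φ 1) • y :=
    calc c • x + φ c • y = S c := hS.symm
      _ = c • S 1 := by rw [← map_smul, smul_eq_mul, mul_one]
      _ = c • x + (c * φ 1) • y := by rw [hS_one, one_smul, smul_add, smul_smul]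
  by_contra hy
  exact hφ (smul_left_injective K hy (add_left_cancel hcompare))

theorem exists_addMonoidHom_map_ne_mul_map_one {K : Type*} [DivisionRing K] [CharZero K] {c : K}
    (hc : c ∉ Set.range ((↑) : ℚ → K)) : ∃ φ : K →+ K, φ c ≠ c * φ 1 := by
  obtain ⟨g, hg⟩ := Module.Projective.exists_dual_eq_one ℚ (one_ne_zero (α := K))
  refine ⟨(Rat.castHom K).toAddMonoidHom.comp g.toAddMonoidHom, fun hmap => hc ⟨g c, ?_⟩⟩
  simpa [hg] using hmap

theorem exists_nonneg_map_ne_mul_map_one {K : Type*} [Ring K] [LinearOrder K] [IsOrderedAddMonoid K]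
    {φ : K →+ K} {c : K} (hφ : φ c ≠ c * φ 1) : ∃ a, 0 ≤ a ∧ φ a ≠ a * φ 1 := by
  rcases le_total 0 c with hc | hc
  · exact ⟨c, hc, hφ⟩
  · exact ⟨-c, neg_nonneg.mpr hc, by simpa using hφ⟩

theorem almostArchimedean_of_extension_property_general {K X : Type*}
    [Field K] [LinearOrder K] [IsStrictOrderedRing K] [Archimedean K]
    [AddCommGroup X] [PartialOrder X] [IsOrderedAddMonoid X] [Module K X] [PosSMulMono K X]
    {c : K} (hc : c ∉ Set.range ((↑) : ℚ → K))
    (h : ∀ T : K → X, (∀ a : K, 0 ≤ a → 0 ≤ T a) →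
      (∀ a b : K, 0 ≤ a → 0 ≤ b → T (a + b) = T a + T b) →
      ∃ S : K →ₗ[K] X, ∀ a : K, 0 ≤ a → S a = T a)
    {x y : X} (hxy : ∀ n : ℤ, n • y ≤ x) : y = 0 := by
  obtain ⟨φ, hφc⟩ := exists_addMonoidHom_map_ne_mul_map_one hc
  obtain ⟨a, ha, hφa⟩ := exists_nonneg_map_ne_mul_map_one hφc
  have hadd (r s : K) :
      (r + s) • x + φ (r + s) • y = (r • x + φ r • y) + (s • x + φ s • y) := by
    rw [map_add, add_smul, add_smul, add_add_add_comm]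
  obtain ⟨S, hS⟩ := h (fun r => r • x + φ r • y)
    (fun _ hr => smul_add_map_smul_nonneg (smul_le_of_forall_zsmul_le hxy) φ hr)
    (fun r s _ _ => hadd r s)
  exact eq_zero_of_linearMap_eq_smul_add_smul (hS 1 zero_le_one) (hS a ha) hφa

/-- If every additive map `T : ℝ₊ → X₊` extends to a linear map `S : ℝ → X`,
then the ordered vector space `X` is almost Archimedean. -/
theorem almostArchimedean_of_extension_property
    {X : Type*} [AddCommGroup X] [PartialOrder X] [IsOrderedAddMonoid X] [Module ℝ X] [PosSMulMono ℝ X]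
    (h : ∀ T : ℝ → X, (∀ a : ℝ, 0 ≤ a → 0 ≤ T a) →
      (∀ a b : ℝ, 0 ≤ a → 0 ≤ b → T (a + b) = T a + T b) →
      ∃ S : ℝ →ₗ[ℝ] X, ∀ a : ℝ, 0 ≤ a → S a = T a) :
    ∀ x y : X, 0 ≤ x → (∀ n : ℤ, n • y ≤ x) → y = 0 :=
  fun _ _ _ hxy => almostArchimedean_of_extension_property_general irrational_sqrt_two h hxy
end

section
/- Let X be an ordered vector space and Y ⊆ X an order ideal (a vector subspace that is order convex: a, b ∈ Y and a ≤ z ≤ b imply z ∈ Y). If the quotient space X/Y, ordered by declaring [f] ≤ [g] whenever g − f + q ∈ X₊ for some q ∈ Y, is almost Archimedean, then Y is uniformly closed in X. -/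
/-!
Write `Y` for the ideal and suppose `y i ∈ Y` with `-(ε i • u) ≤ y i - x ≤ ε i • u`. For a fixed
integer `k`, multiplying by `k` keeps `k • (y i - x)` between `±(|k| * ε i) • u`, hence between
`±u` once `|k| * ε i ≤ 1`. Modulo `Y` this says `k • [x] ≤ [u]`; as `k` is arbitrary, the almost
Archimedean property forces `[x] = 0`.
-/

open Filter Set Topology

section OrderedModule

variable {R M : Type*} [Ring R]
  [AddCommGroup M] [PartialOrder M] [IsOrderedAddMonoid M] [Module R M]

lemma smul_mem_Icc_neg_abs_smul [LinearOrder R] [IsOrderedRing R] [PosSMulMono R M] {v z : M}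
    (hz : z ∈ Icc (-v) v) (c : R) :
    c • z ∈ Icc (-(|c| • v)) (|c| • v) := by
  have abs_smul_le : |c| • z ≤ |c| • v := smul_le_smul_of_nonneg_left hz.2 (abs_nonneg c)
  have neg_le_abs_smul : -(|c| • v) ≤ |c| • z := by
    simpa only [smul_neg] using smul_le_smul_of_nonneg_left hz.1 (abs_nonneg c)
  rcases abs_choice c with hc | hc
  · have smul_eq : c • z = |c| • z := by rw [hc]
    rw [smul_eq]
    exact ⟨neg_le_abs_smul, abs_smul_le⟩
  · have smul_eq : c • z = -(|c| • z) := by rw [hc, neg_smul, neg_neg]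
    rw [smul_eq]
    exact ⟨neg_le_neg abs_smul_le, neg_le.mp neg_le_abs_smul⟩

lemma Icc_neg_smul_subset_Icc_neg [Preorder R] [SMulPosMono R M] {u : M} (hu : 0 ≤ u)
    {r : R} (hr : r ≤ 1) :
    Icc (-(r • u)) (r • u) ⊆ Icc (-u) u := by
  have smul_le : r • u ≤ u := by
    simpa only [one_smul] using smul_le_smul_of_nonneg_right hr hu
  exact Icc_subset_Icc (neg_le_neg smul_le) smul_le

end OrderedModule

section OrderedVectorSpace

variable {𝕜 X ι : Type*} [Field 𝕜] [LinearOrder 𝕜] [IsStrictOrderedRing 𝕜]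
  [TopologicalSpace 𝕜] [OrderTopology 𝕜]
  [AddCommGroup X] [PartialOrder X] [IsOrderedAddMonoid X] [Module 𝕜 X] [PosSMulMono 𝕜 X]
  {l : Filter ι} {ε : ι → 𝕜} {u : X}

lemma eventually_smul_mem_Icc_neg {z : ι → X} (hu : 0 ≤ u) (hε : Tendsto ε l (𝓝 0))
    (hz : ∀ i, z i ∈ Icc (-(ε i • u)) (ε i • u)) (c : 𝕜) :
    ∀ᶠ i in l, c • z i ∈ Icc (-u) u := by
  have tendsto_abs_mul : Tendsto (fun i ↦ |c| * ε i) l (𝓝 0) := by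
    simpa only [mul_zero] using hε.const_mul |c|
  filter_upwards [tendsto_abs_mul.eventually_le_const one_pos] with i hi
  apply Icc_neg_smul_subset_Icc_neg hu hi
  simpa only [mul_smul] using smul_mem_Icc_neg_abs_smul (hz i) c

theorem uniformlyClosed_of_quotient_almostArchimedean_general [l.NeBot] (Y : AddSubgroup X)
    (hAA : ∀ x y : X, (∃ q ∈ Y, 0 ≤ x + q) →
      (∀ n : ℤ, ∃ q ∈ Y, 0 ≤ x - n • y + q) → y ∈ Y)
    (hu : 0 ≤ u) {y : ι → X} (hy : ∀ i, y i ∈ Y) {x : X} (hε : Tendsto ε l (𝓝 0))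
    (hyx : ∀ i, y i - x ∈ Icc (-(ε i • u)) (ε i • u)) : x ∈ Y := by
  refine hAA u x ⟨0, Y.zero_mem, by rwa [add_zero]⟩ fun k ↦ ?_
  obtain ⟨i, neg_le_smul, -⟩ := (eventually_smul_mem_Icc_neg hu hε hyx (k : 𝕜)).exists
  rw [Int.cast_smul_eq_zsmul] at neg_le_smul
  refine ⟨k • y i, Y.zsmul_mem (hy i) k, ?_⟩
  calc
    0 ≤ u + k • (y i - x) := neg_le_iff_add_nonneg'.mp neg_le_smul
    _ = u - k • x + k • y i := by module

end OrderedVectorSpace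

/-- If `Y` is an order ideal (an order convex vector subspace) of an ordered
vector space `X` and the quotient `X/Y` — ordered by `[f] ≤ [g]` iff `g - f + q ∈ X₊` for
some `q ∈ Y` — is almost Archimedean, then `Y` is uniformly closed in `X`.
The almost Archimedean property of `X/Y` is expressed via representatives:
`0 ≤ [x]` iff `∃ q ∈ Y, 0 ≤ x + q`; `n • [y] ≤ [x]` iff `∃ q ∈ Y, 0 ≤ x - n • y + q`;
`[y] = 0` iff `y ∈ Y`. -/
theorem uniformlyClosed_of_quotient_almostArchimedean
    {X : Type*} [AddCommGroup X] [PartialOrder X] [IsOrderedAddMonoid X] [Module ℝ X] [PosSMulMono ℝ X]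
    (Y : Submodule ℝ X)
    (hconv : ∀ a b z : X, a ∈ Y → b ∈ Y → a ≤ z → z ≤ b → z ∈ Y)
    (hAA : ∀ x y : X, (∃ q ∈ Y, 0 ≤ x + q) →
      (∀ n : ℤ, ∃ q ∈ Y, 0 ≤ x - n • y + q) → y ∈ Y) :
    ∀ u : X, 0 ≤ u → ∀ yseq : ℕ → X, (∀ n, yseq n ∈ Y) →
      ∀ (x : X) (ε : ℕ → ℝ), Antitone ε → Filter.Tendsto ε Filter.atTop (nhds 0) →
      (∀ n : ℕ, yseq n - x ∈ Set.Icc (-(ε n • u)) (ε n • u)) → x ∈ Y := by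
  intro u hu yseq hy x ε _ hε hyx
  exact uniformlyClosed_of_quotient_almostArchimedean_general Y.toAddSubgroup hAA hu hy hε hyx
end

section
/- Let Γ be a set with at least two elements and let Y be the real vector space of all bounded real-valued functions on Γ, ordered by: f ≤ g if and only if either f = g or inf_{t∈Γ} (g(t) − f(t)) > 0. Then Y is an almost Archimedean ordered vector space: if f, h ∈ Y with n·h ≤ f for all integers n, then h = 0. -/
/-- The order on the space of bounded real functions on `Γ`:
`f ≤ g` iff `f = g` or `inf_{t ∈ Γ} (g t - f t) > 0`. -/
def strongLe {Γ : Type*} (f g : Γ → ℝ) : Prop :=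
  f = g ∨ 0 < ⨅ t : Γ, (g t - f t)

theorem bddBelow_range_of_iInf_pos {ι : Sort*} {u : ι → ℝ} (hu : 0 < ⨅ i, u i) :
    BddBelow (Set.range u) := by
  by_contra hunbdd
  -- In `ℝ` the infimum of a family that is unbounded below is `0` by convention.
  exact hu.ne' (Real.iInf_of_not_bddBelow hunbdd)

theorem strongLe.le {Γ : Type*} {f g : Γ → ℝ} (hfg : strongLe f g) : f ≤ g := by
  rcases hfg with heq | hpos
  · exact heq.le
  · intro t
    have hinf_le : ⨅ s, (g s - f s) ≤ g t - f t := ciInf_le (bddBelow_range_of_iInf_pos hpos) t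
    exact sub_nonneg.mp (hpos.le.trans hinf_le)

theorem eq_zero_of_forall_zsmul_le {G : Type*} [AddCommGroup G] [LinearOrder G]
    [IsOrderedAddMonoid G] [Archimedean G] {x y : G} (hle : ∀ n : ℤ, n • x ≤ y) : x = 0 := by
  by_contra hx
  obtain ⟨n, hn⟩ : ∃ n : ℕ, y < n • |x| := exists_lt_nsmul (abs_pos.mpr hx) y
  rcases abs_choice x with habs | habs
  · exact (hle n).not_gt (by simpa [habs] using hn)
  · exact (hle (-n)).not_gt (by simpa [habs] using hn)

theorem strongLe_almostArchimedean_general {Γ : Type*} {f h : Γ → ℝ}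
    (hle : ∀ n : ℤ, strongLe ((n : ℝ) • h) f) : h = 0 := by
  funext t
  refine eq_zero_of_forall_zsmul_le (y := f t) fun n => ?_
  simpa using (hle n).le t

/-- Let `Γ` have at least two elements and order the bounded real functions
on `Γ` by `f ≤ g` iff `f = g` or `inf_t (g t - f t) > 0`. This space is almost
Archimedean: if `f, h` are bounded and `n • h ≤ f` for all integers `n`, then `h = 0`. -/
theorem strongLe_almostArchimedean
    {Γ : Type*} (hΓ : ∃ a b : Γ, a ≠ b)
    (f h : Γ → ℝ)
    (hf : ∃ C : ℝ, ∀ t : Γ, |f t| ≤ C)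
    (hh : ∃ C : ℝ, ∀ t : Γ, |h t| ≤ C)
    (hle : ∀ n : ℤ, strongLe ((n : ℝ) • h) f) :
    h = 0 :=
  strongLe_almostArchimedean_general hle
end

section
/- Let X be an ordered vector space, x ∈ X₊, and y ∈ X with −(1/n)·x ≤ y ≤ (1/n)·x for all natural numbers n ≥ 1. Let f : ℝ → ℝ be an additive (ℚ-linear) function. Then the mapping T : ℝ₊ → X defined by T(a) = a·x + f(a)·y is additive and maps ℝ₊ into X₊, i.e., 0 ≤ T(a) for every real a ≥ 0. -/
/-!
If `-(r • x) ≤ y ≤ r • x` with `r > 0`, then for all scalars `a` and `c`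
`a • x + c • y = ((a / r + c) / 2) • (r • x + y) + ((a / r - c) / 2) • (r • x - y)`,
where both vectors on the right are nonnegative, and both coefficients are nonnegative as soon as
`|c| ≤ a / r`. For `a > 0` this holds with `r = 1 / n` and `n` large, whatever the value `c = f a`.
-/

section OrderedVectorSpace

variable {K X : Type*} [Field K] [LinearOrder K] [IsStrictOrderedRing K]
  [AddCommGroup X] [PartialOrder X] [IsOrderedAddMonoid X] [Module K X] [PosSMulMono K X]
  {x y : X}

theorem smul_add_smul_nonneg_of_abs_le_div {r a c : K} (hr : 0 < r)
    (neg_le_y : -(r • x) ≤ y) (y_le : y ≤ r • x) (hc : |c| ≤ a / r) :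
    0 ≤ a • x + c • y := by
  obtain ⟨neg_le_c, c_le⟩ := abs_le.mp hc
  have decomposition : a • x + c • y =
      ((a / r + c) / 2) • (r • x + y) + ((a / r - c) / 2) • (r • x - y) := by
    match_scalars <;> field
  rw [decomposition]
  exact add_nonneg
    (smul_nonneg (by linarith) (neg_le_iff_add_nonneg'.mp neg_le_y))
    (smul_nonneg (by linarith) (sub_nonneg.mpr y_le))

theorem smul_add_smul_nonneg_of_forall_natCast_inv [Archimedean K]
    (hy : ∀ n : ℕ, 1 ≤ n → -((n : K)⁻¹ • x) ≤ y ∧ y ≤ (n : K)⁻¹ • x)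
    {a : K} (ha : 0 < a) (c : K) : 0 ≤ a • x + c • y := by
  obtain ⟨n, hn⟩ := exists_nat_gt (|c| / a)
  have n_pos : (0 : K) < n := (div_nonneg (abs_nonneg c) ha.le).trans_lt hn
  obtain ⟨neg_le_y, y_le⟩ := hy n (Nat.cast_pos.mp n_pos)
  have abs_le_div : |c| ≤ a / (n : K)⁻¹ := by
    rw [div_inv_eq_mul, mul_comm]
    exact ((div_lt_iff₀ ha).mp hn).le
  exact smul_add_smul_nonneg_of_abs_le_div (inv_pos.mpr n_pos) neg_le_y y_le abs_le_div

theorem additive_pos_map_of_small_y_general [Archimedean K]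
    (hy : ∀ n : ℕ, 1 ≤ n → -((n : K)⁻¹ • x) ≤ y ∧ y ≤ (n : K)⁻¹ • x)
    {f : K → K} (hf : ∀ a b : K, 0 ≤ a → 0 ≤ b → f (a + b) = f a + f b) :
    (∀ a b : K, 0 ≤ a → 0 ≤ b →
      (a + b) • x + f (a + b) • y = (a • x + f a • y) + (b • x + f b • y)) ∧
    (∀ a : K, 0 ≤ a → 0 ≤ a • x + f a • y) := by
  refine ⟨fun a b ha hb => ?additive, fun a ha => ?nonneg⟩
  case additive =>
    rw [hf a b ha hb]
    module
  case nonneg =>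
    rcases ha.eq_or_lt with rfl | a_pos
    · have map_zero : f 0 = 0 := by simpa using hf 0 0 le_rfl le_rfl
      simp [map_zero]
    · exact smul_add_smul_nonneg_of_forall_natCast_inv hy a_pos (f a)

end OrderedVectorSpace

/-- Let `X` be an ordered vector space, `x ∈ X₊`, and `y ∈ X` with
`-(1/n) • x ≤ y ≤ (1/n) • x` for all `n ≥ 1`. If `f : ℝ → ℝ` is additive, then the map
`T : ℝ₊ → X`, `T a = a • x + f a • y`, is additive and takes values in `X₊`. -/
theorem additive_pos_map_of_small_y
    {X : Type*} [AddCommGroup X] [PartialOrder X] [IsOrderedAddMonoid X] [Module ℝ X] [PosSMulMono ℝ X]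
    (x y : X) (hx : 0 ≤ x)
    (hy : ∀ n : ℕ, 1 ≤ n → -((n : ℝ)⁻¹ • x) ≤ y ∧ y ≤ (n : ℝ)⁻¹ • x)
    (f : ℝ → ℝ) (hf : ∀ a b : ℝ, f (a + b) = f a + f b) :
    (∀ a b : ℝ, 0 ≤ a → 0 ≤ b →
      (a + b) • x + f (a + b) • y = (a • x + f a • y) + (b • x + f b • y)) ∧
    (∀ a : ℝ, 0 ≤ a → 0 ≤ a • x + f a • y) :=
  additive_pos_map_of_small_y_general hy fun a b _ _ => hf a b
end
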